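/- arXiv:2008.05709 — 7 statements merged into one kernel-verified Lean document; each statement's English description precedes it below -/
import Mathlib

section
/- For every μ ∈ ℝ and every ω ∈ ℂ with |ω| = 1 and 2 + iμ(1 − ω) ≠ 0, one has |(2ω + iμ(ω − 1)) / (2 + iμ(1 − ω))| ≤ √(1 + μ²) + |μ|. (Equivalently: the Möbius transformation ω ↦ ω·(1 + (iμ/2)(1 − ω⁻¹)) / (1 + (iμ/2)(1 − ω)) maps the unit circle into the closed disk of radius √(1+μ²) + |μ|.) -/
/-- The discriminant-type inequality on the unit circle behind the Möbius modulus bound. -/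
theorem two_mul_abs_mul_sqrt_le_of_sq_add_sq_eq_one {x y : ℝ} (μ : ℝ) (h : x ^ 2 + y ^ 2 = 1) :
    2 * |y| * √(1 + μ ^ 2) ≤ 2 + μ ^ 2 * (1 - x) := by
  have hx : x ≤ 1 := by nlinarith [sq_nonneg y]
  have hs : √(1 + μ ^ 2) ^ 2 = 1 + μ ^ 2 := Real.sq_sqrt (by positivity)
  have hnonneg : 0 ≤ 2 + μ ^ 2 * (1 - x) := by
    have := mul_nonneg (sq_nonneg μ) (sub_nonneg.2 hx)
    linarith
  refine le_of_sq_le_sq ?_ hnonneg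
  rw [mul_pow, mul_pow, hs, sq_abs, show y ^ 2 = 1 - x ^ 2 by linarith]
  linarith [sq_nonneg (2 * x - μ ^ 2 * (1 - x))]

/-- For every `μ ∈ ℝ` and `ω ∈ ℂ` with `|ω| = 1` and
`2 + iμ(1 − ω) ≠ 0`, one has `|(2ω + iμ(ω − 1)) / (2 + iμ(1 − ω))| ≤ √(1 + μ²) + |μ|`. -/
theorem mobius_unit_circle_bound
    (μ : ℝ) (ω : ℂ) (hω : ‖ω‖ = 1)
    (hden : 2 + Complex.I * (μ : ℂ) * (1 - ω) ≠ 0) :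
    ‖(2 * ω + Complex.I * (μ : ℂ) * (ω - 1)) /
        (2 + Complex.I * (μ : ℂ) * (1 - ω))‖ ≤
      Real.sqrt (1 + μ ^ 2) + |μ| := by
  obtain ⟨x, y⟩ := ω
  have hxy : x ^ 2 + y ^ 2 = 1 := by
    have := Complex.sq_norm ⟨x, y⟩
    rw [hω, Complex.normSq_mk] at this
    linarith
  have hD : ‖2 + Complex.I * (μ : ℂ) * (1 - ⟨x, y⟩)‖ ^ 2
      = 4 + 2 * μ ^ 2 * (1 - x) + 4 * μ * y := by
    rw [Complex.sq_norm, Complex.normSq_apply]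
    simp
    linear_combination μ ^ 2 * hxy
  have hN : ‖2 * (⟨x, y⟩ : ℂ) + Complex.I * (μ : ℂ) * (⟨x, y⟩ - 1)‖ ^ 2
      = 4 + 2 * μ ^ 2 * (1 - x) - 4 * μ * y := by
    rw [Complex.sq_norm, Complex.normSq_apply]
    simp
    linear_combination (4 + μ ^ 2) * hxy
  have hkey := two_mul_abs_mul_sqrt_le_of_sq_add_sq_eq_one μ hxy
  rw [norm_div, div_le_iff₀ (norm_pos_iff.2 hden)]
  refine le_of_sq_le_sq ?_ (by positivity)
  rw [mul_pow, hD, hN]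
  have hs : √(1 + μ ^ 2) ^ 2 = 1 + |μ| ^ 2 := by
    rw [sq_abs]
    exact Real.sq_sqrt (by positivity)
  have hs0 : 0 ≤ √(1 + μ ^ 2) := Real.sqrt_nonneg _
  generalize √(1 + μ ^ 2) = s at *
  have hμy : -(|μ| * |y|) ≤ μ * y := by
    rw [← abs_mul]
    exact neg_abs_le _
  have hcross : 0 ≤ |μ| * (2 + μ ^ 2 * (1 - x)) + 2 * (μ * y) * s := by
    nlinarith [mul_le_mul_of_nonneg_left hkey (abs_nonneg μ), mul_le_mul_of_nonneg_right hμy hs0]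
  have hprod := mul_nonneg (add_nonneg hs0 (abs_nonneg μ)) hcross
  linear_combination 4 * hprod - (4 + 2 * μ ^ 2 * (1 - x) - 4 * μ * y) * hs
end

section
/- Let 0 < m ≤ M and K > 0. There exist constants C₀, C₁ > 0, depending only on m, M and K, such that for every L ∈ [m, M], every continuous W : [0,L] → ℝ with sup_{x∈[0,L]} |W(x)| ≤ M, and every z ∈ ℂ with Re z ∈ [−K, K] and Im z > C₀, the solution E of −E'' + W E = z E on [0,L] with E(0) = 1 and E'(0) = −i√z satisfies |E(L)| ≥ C₁ · Im z. -/
open Set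

/-- If `|V|` is dominated by a small multiple of `b (|F| + |G|)`, the derivative of
`|G|² - 4 |F|²` along `G' = -i s G + V`, `F' = i s F + V` is at least `b (|G|² - 4 |F|²)`,
where `b = Im s`. -/
lemma cone_rate_le (s F G V : ℂ) (hs : 0 ≤ s.im)
    (hV : ‖V‖ ≤ 2 / 9 * s.im * (‖F‖ + ‖G‖)) :
    s.im * (‖G‖ ^ 2 - 4 * ‖F‖ ^ 2) ≤
      2 * inner ℝ G (-Complex.I * s * G + V) - 4 * (2 * inner ℝ F (Complex.I * s * F + V)) := by
  have hG : inner ℝ G (-Complex.I * s * G) = s.im * ‖G‖ ^ 2 := by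
    rw [← Complex.normSq_eq_norm_sq, Complex.normSq_apply, Complex.inner]
    simp
    ring
  have hF : inner ℝ F (Complex.I * s * F) = -s.im * ‖F‖ ^ 2 := by
    rw [← Complex.normSq_eq_norm_sq, Complex.normSq_apply, Complex.inner]
    simp
    ring
  have hGV : -(‖G‖ * ‖V‖) ≤ inner ℝ G V := (abs_le.1 (abs_real_inner_le_norm G V)).1
  have hFV : inner ℝ F V ≤ ‖F‖ * ‖V‖ := real_inner_le_norm F V
  rw [inner_add_right, inner_add_right, hG, hF]
  have h₁ := mul_le_mul_of_nonneg_left hV (norm_nonneg G)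
  have h₂ := mul_le_mul_of_nonneg_left hV (norm_nonneg F)
  have h₃ := mul_nonneg hs (sq_nonneg (‖G‖ - 2 * ‖F‖))
  have h₄ := mul_nonneg hs (sq_nonneg ‖F‖)
  nlinarith

/-- Gronwall's inequality from below, for a differential inequality `b H ≤ H'`. -/
lemma mul_exp_le_of_mul_le_deriv {H H' : ℝ → ℝ} {b L : ℝ} (hL : 0 ≤ L)
    (hH : ∀ x ∈ Icc 0 L, HasDerivWithinAt H (H' x) (Icc 0 L) x)
    (hle : ∀ x ∈ Icc 0 L, b * H x ≤ H' x) :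
    H 0 * Real.exp (b * L) ≤ H L := by
  have hd : ∀ x ∈ Icc 0 L, HasDerivWithinAt (fun x => H x * Real.exp (-(b * x)))
      (H' x * Real.exp (-(b * x)) + H x * (Real.exp (-(b * x)) * -(b * 1))) (Icc 0 L) x :=
    fun x hx => (hH x hx).mul (((hasDerivAt_id x).const_mul b).neg.exp.hasDerivWithinAt)
  have hmono : MonotoneOn (fun x => H x * Real.exp (-(b * x))) (Icc 0 L) := by
    refine monotoneOn_of_hasDerivWithinAt_nonneg (convex_Icc 0 L)
      (fun x hx => (hd x hx).continuousWithinAt)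
      (fun x hx => (hd x (interior_subset hx)).mono interior_subset) fun x hx => ?_
    have := mul_nonneg (sub_nonneg.2 (hle x (interior_subset hx)))
      (Real.exp_pos (-(b * x))).le
    linarith
  have h := hmono (left_mem_Icc.2 hL) (right_mem_Icc.2 hL) hL
  simp only [mul_zero, neg_zero, Real.exp_zero, mul_one] at h
  calc H 0 * Real.exp (b * L)
      ≤ H L * Real.exp (-(b * L)) * Real.exp (b * L) := by gcongr
    _ = H L := by rw [mul_assoc, ← Real.exp_add]; simp

/-- Exponential growth of the solution of `E'' = (W - s²) E` with `E 0 = 1`, `E' 0 = -i s`, once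
`Im s` is large compared with the potential. -/
lemma exp_le_norm_of_schrodinger {L M : ℝ} {W : ℝ → ℝ} {s : ℂ} {E E' E'' : ℝ → ℂ}
    (hL : 0 ≤ L) (hs : 0 < s.im) (hsM : M ≤ 4 / 9 * s.im ^ 2)
    (hW : ∀ x ∈ Icc 0 L, |W x| ≤ M)
    (hE : ∀ x ∈ Icc 0 L, HasDerivWithinAt E (E' x) (Icc 0 L) x)
    (hE' : ∀ x ∈ Icc 0 L, HasDerivWithinAt E' (E'' x) (Icc 0 L) x)
    (hode : ∀ x ∈ Icc 0 L, -E'' x + (W x : ℂ) * E x = s ^ 2 * E x)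
    (h0 : E 0 = 1) (h0' : E' 0 = -Complex.I * s) :
    Real.exp (s.im * L / 2) / 2 ≤ ‖E L‖ := by
  set G : ℝ → ℂ := fun x => E' x - Complex.I * s * E x with hGdef
  set F : ℝ → ℂ := fun x => E' x + Complex.I * s * E x with hFdef
  have hsnorm : s.im ≤ ‖s‖ := Complex.im_le_norm s
  have hFG : ∀ x, 2 * ‖s‖ * ‖E x‖ = ‖F x - G x‖ := fun x => by
    have : F x - G x = 2 * Complex.I * s * E x := by simp only [hFdef, hGdef]; ring
    rw [this]; simp
  have hG : ∀ x ∈ Icc 0 L,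
      HasDerivWithinAt G (-Complex.I * s * G x + W x * E x) (Icc 0 L) x := fun x hx => by
    refine HasDerivWithinAt.congr_deriv ((hE' x hx).sub ((hE x hx).const_mul (Complex.I * s))) ?_
    simp only [hGdef]
    linear_combination -hode x hx - s ^ 2 * E x * Complex.I_sq
  have hF : ∀ x ∈ Icc 0 L,
      HasDerivWithinAt F (Complex.I * s * F x + W x * E x) (Icc 0 L) x := fun x hx => by
    refine HasDerivWithinAt.congr_deriv ((hE' x hx).add ((hE x hx).const_mul (Complex.I * s))) ?_
    simp only [hFdef]
    linear_combination -hode x hx - s ^ 2 * E x * Complex.I_sq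
  have hgrow := mul_exp_le_of_mul_le_deriv (b := s.im)
    (H := fun x => ‖G x‖ ^ 2 - 4 * ‖F x‖ ^ 2) hL
    (fun x hx => (hG x hx).norm_sq.sub ((hF x hx).norm_sq.const_mul 4)) fun x hx => by
      refine cone_rate_le s (F x) (G x) (W x * E x) hs.le ?_
      have h₁ : ‖(W x : ℂ) * E x‖ ≤ 4 / 9 * s.im ^ 2 * ‖E x‖ := by
        rw [norm_mul, Complex.norm_real, Real.norm_eq_abs]
        gcongr
        exact (hW x hx).trans hsM
      have h₂ : 2 * s.im * ‖E x‖ ≤ ‖F x‖ + ‖G x‖ :=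
        calc 2 * s.im * ‖E x‖ ≤ 2 * ‖s‖ * ‖E x‖ := by gcongr
          _ ≤ ‖F x‖ + ‖G x‖ := (hFG x).trans_le (norm_sub_le _ _)
      nlinarith [mul_le_mul_of_nonneg_left h₂ hs.le]
  have hG0 : ‖G 0‖ = 2 * ‖s‖ := by
    have : G 0 = -2 * Complex.I * s := by simp only [hGdef, h0, h0']; ring
    rw [this]; simp
  have hF0 : F 0 = 0 := by simp [hFdef, h0, h0']
  have hexp : Real.exp (s.im * L) = Real.exp (s.im * L / 2) ^ 2 := by
    rw [← Real.exp_nat_mul]; congr 1; push_cast; ring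
  simp only [hG0, hF0, norm_zero, hexp] at hgrow
  have hexp_pos := Real.exp_pos (s.im * L / 2)
  have hGL : 2 * ‖s‖ * Real.exp (s.im * L / 2) ≤ ‖G L‖ :=
    le_of_sq_le_sq (by nlinarith [sq_nonneg ‖F L‖]) (norm_nonneg _)
  have hFL : 2 * ‖F L‖ ≤ ‖G L‖ :=
    le_of_sq_le_sq (by nlinarith [sq_nonneg (‖s‖ * Real.exp (s.im * L / 2))]) (norm_nonneg _)
  have htri : ‖G L‖ - ‖F L‖ ≤ 2 * ‖s‖ * ‖E L‖ := by
    rw [hFG, norm_sub_rev (F L)]; exact norm_sub_norm_le _ _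
  refine le_of_mul_le_mul_left ?_ (hs.trans_le hsnorm)
  linarith

/-- The principal square root of a point of the upper half plane has
positive imaginary part, whose square is `(|z| - Re z) / 2`. -/
lemma im_sqrt_of_im_pos {z : ℂ} (hz : 0 < z.im) :
    0 < (z ^ (1 / 2 : ℂ)).im ∧ (z ^ (1 / 2 : ℂ)) ^ 2 = z ∧
      (z ^ (1 / 2 : ℂ)).im ^ 2 = (‖z‖ - z.re) / 2 := by
  set s := z ^ (1 / 2 : ℂ) with hsdef
  have hsq : s ^ 2 = z := by
    rw [hsdef, one_div]; exact_mod_cast Complex.cpow_nat_inv_pow z two_ne_zero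
  have hz0 : z ≠ 0 := fun h => by simp [h] at hz
  have hre : 0 ≤ s.re := by
    rw [hsdef, Complex.cpow_def_of_ne_zero hz0, Complex.exp_re]
    have him : (Complex.log z * (1 / 2)).im = Complex.arg z / 2 := by
      rw [show Complex.log z * (1 / 2) = Complex.log z / 2 by ring]
      simp [Complex.log_im]
    rw [him]
    refine mul_nonneg (Real.exp_pos _).le (Real.cos_nonneg_of_mem_Icc ⟨?_, ?_⟩)
    · linarith [Complex.neg_pi_lt_arg z]
    · linarith [Complex.arg_le_pi z]
  have him : z.im = 2 * s.re * s.im := by rw [← hsq, sq, Complex.mul_im]; ring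
  have hzre : z.re = s.re ^ 2 - s.im ^ 2 := by rw [← hsq, sq, Complex.mul_re]; ring
  have hnorm : ‖z‖ = s.re ^ 2 + s.im ^ 2 := by
    rw [← hsq, norm_pow, ← Complex.normSq_eq_norm_sq, Complex.normSq_apply]; ring
  exact ⟨by by_contra! h; nlinarith, hsq, by rw [hnorm, hzre]; ring⟩

/-- Let `0 < m ≤ M`, `K > 0`. There exist `C₀, C₁ > 0` depending only on
`m, M, K` such that for every `L ∈ [m, M]`, continuous `W : [0,L] → ℝ` with `‖W‖_∞ ≤ M`,
and `z` with `Re z ∈ [−K,K]`, `Im z > C₀`, the solution `E` of `−E'' + W E = z E` with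
`E(0) = 1`, `E'(0) = −i√z` satisfies `|E(L)| ≥ C₁ · Im z`. -/
theorem abs_E_lower_bound
    (m M K : ℝ) (hm : 0 < m) (hmM : m ≤ M) (hK : 0 < K) :
    ∃ C₀ > (0:ℝ), ∃ C₁ > (0:ℝ),
      ∀ L ∈ Icc m M, ∀ W : ℝ → ℝ, ContinuousOn W (Icc 0 L) →
        (∀ x ∈ Icc (0:ℝ) L, |W x| ≤ M) →
        ∀ z : ℂ, z.re ∈ Icc (-K) K → C₀ < z.im →
          ∀ E E' E'' : ℝ → ℂ,
            (∀ x ∈ Icc (0:ℝ) L, HasDerivWithinAt E (E' x) (Icc 0 L) x) →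
            (∀ x ∈ Icc (0:ℝ) L, HasDerivWithinAt E' (E'' x) (Icc 0 L) x) →
            ContinuousOn E'' (Icc 0 L) →
            (∀ x ∈ Icc (0:ℝ) L, -E'' x + (W x : ℂ) * E x = z * E x) →
            E 0 = 1 → E' 0 = -Complex.I * z ^ (1/2 : ℂ) →
            C₁ * z.im ≤ ‖E L‖ := by
  have hM : 0 < M := hm.trans_le hmM
  refine ⟨2 * K + 9 * M, by positivity, m ^ 2 / 64, by positivity, ?_⟩
  intro L hL W _ hW z hz hzim E E' E'' hE hE' _ hode h0 h0'
  obtain ⟨hs, hsq, him⟩ := im_sqrt_of_im_pos (z := z) (by linarith)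
  set s := z ^ (1 / 2 : ℂ)
  have hL0 : 0 < L := hm.trans_le hL.1
  have him4 : z.im / 4 ≤ s.im ^ 2 := by linarith [Complex.im_le_norm z, hz.2]
  have hgrow := exp_le_norm_of_schrodinger hL0.le hs (by linarith) hW hE hE'
    (by rwa [hsq]) h0 h0'
  have hexp := Real.quadratic_le_exp_of_nonneg (x := s.im * L / 2) (by positivity)
  have hpos : 0 < s.im * L / 2 := by positivity
  have hmL : z.im / 4 * m ^ 2 ≤ s.im ^ 2 * L ^ 2 := by
    have := hL.1
    gcongr
  nlinarith
end

section
/- Let 0 < m ≤ M and K > 0. There exist constants C₀, C₂ > 0, depending only on m, M and K, such that for every L ∈ [m, M], every continuous W : [0,L] → ℝ with sup_{x∈[0,L]} |W(x)| ≤ M, and every z ∈ ℂ with Re z ∈ [−K, K] and Im z > C₀, the solution E of −E'' + W E = z E on [0,L] with E(0) = 1 and E'(0) = −i√z satisfies E(L) ≠ 0 and |E'(L)/E(L) + i√z| ≤ C₂ · |√z| / Im z. -/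
open Set

/-- The principal square root has nonnegative real part. -/
lemma Complex.cpow_half_re_nonneg (z : ℂ) : 0 ≤ (z ^ (1 / 2 : ℂ)).re := by
  by_cases hz : z = 0
  · simp [hz]
  · rw [Complex.cpow_def_of_ne_zero hz, Complex.exp_re]
    have him : (Complex.log z * (1 / 2)).im = z.arg / 2 := by
      have h : (1 / 2 : ℂ) = ((1 / 2 : ℝ) : ℂ) := by push_cast; rfl
      rw [h, Complex.im_mul_ofReal, Complex.log_im]
      ring
    rw [him]
    refine mul_nonneg (Real.exp_pos _).le (Real.cos_nonneg_of_mem_Icc ⟨?_, ?_⟩)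
    · linarith [Complex.neg_pi_lt_arg z]
    · linarith [Complex.arg_le_pi z]

lemma Complex.cpow_half_sq (z : ℂ) : (z ^ (1 / 2 : ℂ)) ^ 2 = z := by
  simp

lemma Complex.inner_mul_self_right (a w : ℂ) : inner ℝ w (a * w) = a.re * ‖w‖ ^ 2 := by
  rw [Complex.inner, ← Complex.normSq_eq_norm_sq, Complex.normSq_apply]
  simp only [Complex.mul_re, Complex.mul_im, Complex.conj_re, Complex.conj_im]
  ring

/-- If `E'' = (W + a²) E` with `|W| ≤ M` and `M + r² ≤ 2 r Re a`, then
`‖E' - a E‖² - r² ‖E‖²` is nonincreasing. -/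
lemma antitoneOn_normSq_sub_of_schrodinger {L M r : ℝ} {a : ℂ} {W : ℝ → ℝ} {E E' E'' : ℝ → ℂ}
    (ha : 0 ≤ a.re) (hr : M + r ^ 2 ≤ 2 * r * a.re)
    (hW : ∀ x ∈ Icc (0 : ℝ) L, |W x| ≤ M)
    (hE : ∀ x ∈ Icc (0 : ℝ) L, HasDerivWithinAt E (E' x) (Icc 0 L) x)
    (hE' : ∀ x ∈ Icc (0 : ℝ) L, HasDerivWithinAt E' (E'' x) (Icc 0 L) x)
    (hode : ∀ x ∈ Icc (0 : ℝ) L, E'' x = (W x + a ^ 2) * E x) :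
    AntitoneOn (fun x => ‖E' x - a * E x‖ ^ 2 - r ^ 2 * ‖E x‖ ^ 2) (Icc 0 L) := by
  have hderiv : ∀ x ∈ Icc (0 : ℝ) L,
      HasDerivWithinAt (fun x => ‖E' x - a * E x‖ ^ 2 - r ^ 2 * ‖E x‖ ^ 2)
        (2 * inner ℝ (E' x - a * E x) (E'' x - a * E' x) - r ^ 2 * (2 * inner ℝ (E x) (E' x)))
        (Icc 0 L) x := fun x hx =>
    ((hE' x hx).sub ((hE x hx).const_mul a)).norm_sq.sub ((hE x hx).norm_sq.const_mul (r ^ 2))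
  refine antitoneOn_of_hasDerivWithinAt_nonpos (convex_Icc 0 L)
    (fun x hx => (hderiv x hx).continuousWithinAt)
    (fun x hx => (hderiv x (interior_subset hx)).mono interior_subset) fun x hx => ?_
  replace hx := interior_subset hx
  set u := E' x - a * E x with hu
  have hu' : E'' x - a * E' x = (-a) * u + W x • E x := by
    rw [hode x hx, hu, Complex.real_smul]; ring
  have hE'x : E' x = a * E x + u := by rw [hu]; ring
  rw [hu', hE'x, inner_add_right, inner_add_right, Complex.inner_mul_self_right,
    Complex.inner_mul_self_right, real_inner_smul_right, real_inner_comm u (E x), Complex.neg_re]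
  have hWr : (W x - r ^ 2) * inner ℝ u (E x) ≤ (M + r ^ 2) * (‖u‖ * ‖E x‖) := by
    calc (W x - r ^ 2) * inner ℝ u (E x) ≤ |W x - r ^ 2| * |inner ℝ u (E x)| := by
          rw [← abs_mul]; exact le_abs_self _
      _ ≤ (M + r ^ 2) * (‖u‖ * ‖E x‖) := by
          refine mul_le_mul ?_ (abs_real_inner_le_norm _ _) (abs_nonneg _) ?_
          · obtain ⟨h₁, h₂⟩ := abs_le.1 (hW x hx)
            exact abs_le.2 ⟨by linarith, by nlinarith [sq_nonneg r]⟩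
          · nlinarith [(abs_nonneg _).trans (hW x hx), sq_nonneg r]
  have hcross := mul_le_mul_of_nonneg_right hr (by positivity : 0 ≤ ‖u‖ * ‖E x‖)
  nlinarith [mul_nonneg ha (sq_nonneg (‖u‖ - r * ‖E x‖))]


/-- Let `0 < m ≤ M`, `K > 0`. There exist `C₀, C₂ > 0` depending only on
`m, M, K` such that for every `L ∈ [m, M]`, continuous `W : [0,L] → ℝ` with `‖W‖_∞ ≤ M`,
and `z` with `Re z ∈ [−K,K]`, `Im z > C₀`, the solution `E` of `−E'' + W E = z E` with
`E(0) = 1`, `E'(0) = −i√z` satisfies `E(L) ≠ 0` and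
`|E'(L)/E(L) + i√z| ≤ C₂ |√z| / Im z`. -/
theorem log_deriv_E_estimate
    (m M K : ℝ) (hm : 0 < m) (hmM : m ≤ M) (hK : 0 < K) :
    ∃ C₀ > (0:ℝ), ∃ C₂ > (0:ℝ),
      ∀ L ∈ Icc m M, ∀ W : ℝ → ℝ, ContinuousOn W (Icc 0 L) →
        (∀ x ∈ Icc (0:ℝ) L, |W x| ≤ M) →
        ∀ z : ℂ, z.re ∈ Icc (-K) K → C₀ < z.im →
          ∀ E E' E'' : ℝ → ℂ,
            (∀ x ∈ Icc (0:ℝ) L, HasDerivWithinAt E (E' x) (Icc 0 L) x) →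
            (∀ x ∈ Icc (0:ℝ) L, HasDerivWithinAt E' (E'' x) (Icc 0 L) x) →
            ContinuousOn E'' (Icc 0 L) →
            (∀ x ∈ Icc (0:ℝ) L, -E'' x + (W x : ℂ) * E x = z * E x) →
            E 0 = 1 → E' 0 = -Complex.I * z ^ (1/2 : ℂ) →
            E L ≠ 0 ∧
              ‖E' L / E L + Complex.I * z ^ (1/2 : ℂ)‖ ≤
                C₂ * ‖z ^ (1/2 : ℂ)‖ / z.im := by
  have hM : 0 < M := hm.trans_le hmM
  refine ⟨2 * M + K, by positivity, 2 * M, by positivity, ?_⟩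
  intro L hL W _ hW z hzre hzim E E' E'' hE hE' _ hode hE0 hE'0
  set s := z ^ (1 / 2 : ℂ) with hs
  have hsre : 0 ≤ s.re := Complex.cpow_half_re_nonneg z
  have hsq : s ^ 2 = z := Complex.cpow_half_sq z
  have hre : s.re ^ 2 - s.im ^ 2 = z.re := by
    rw [← hsq, sq s, Complex.mul_re]; ring
  have him : 2 * s.re * s.im = z.im := by
    rw [← hsq, sq s, Complex.mul_im]; ring
  have hz : 0 < z.im := by linarith
  have hα : 0 < s.im := by
    by_contra! h
    nlinarith [mul_nonneg hsre (neg_nonneg.2 h)]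
  have hαM : M ≤ s.im ^ 2 := by nlinarith [sq_nonneg (s.re - s.im), hzre.2]
  set a : ℂ := -Complex.I * s with ha
  have hare : a.re = s.im := by simp [ha]
  have hasq : a ^ 2 = -z := by
    rw [ha, mul_pow, hsq, neg_sq, Complex.I_sq]; ring
  set r : ℝ := M / s.im with hr
  have hrpos : 0 < r := by positivity
  have hrα : r * s.im = M := div_mul_cancel₀ M hα.ne'
  have hr2 : r ^ 2 ≤ M := by
    rw [hr, div_pow, div_le_iff₀ (by positivity), sq M]
    exact mul_le_mul_of_nonneg_left hαM hM.le
  have hL0 : 0 ≤ L := hm.le.trans hL.1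
  have hle := antitoneOn_normSq_sub_of_schrodinger (a := a) (r := r)
    (by rw [hare]; exact hα.le) (by rw [hare]; linarith) hW hE hE'
    (fun x hx => by rw [hasq]; linear_combination -hode x hx)
    (left_mem_Icc.2 hL0) (right_mem_Icc.2 hL0) hL0
  simp only [hE0, hE'0, mul_one, sub_self, norm_zero, norm_one] at hle
  have hEL : E L ≠ 0 := by
    intro h
    rw [h, norm_zero] at hle
    nlinarith [sq_nonneg ‖E' L - a * 0‖, sq_pos_of_pos hrpos]
  refine ⟨hEL, ?_⟩
  have hquot : E' L / E L + Complex.I * s = (E' L - a * E L) / E L := by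
    rw [ha]; field_simp; ring
  have hnum : ‖E' L - a * E L‖ ≤ r * ‖E L‖ := by
    refine abs_le_of_sq_le_sq' ?_ (by positivity) |>.2
    nlinarith [sq_nonneg r]
  calc ‖E' L / E L + Complex.I * s‖ ≤ r := by
        rw [hquot, norm_div, div_le_iff₀ (norm_pos_iff.2 hEL)]
        exact hnum
    _ ≤ 2 * M * ‖s‖ / z.im := by
        rw [hr, div_le_div_iff₀ hα hz, ← him]
        have := mul_le_mul_of_nonneg_left (Complex.re_le_norm s) (by positivity : 0 ≤ 2 * M * s.im)
        linarith
end

section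
/- Let 0 < m ≤ M. There exists a constant C > 0, depending only on m and M, such that for every L ∈ [m, M], every continuous W : [0,L] → ℝ with sup_{x∈[0,L]} |W(x)| ≤ M, and every z ∈ ℂ with Im z > 0 and |√z| ≥ 1, the solution E of −E'' + W E = z E on [0,L] with E(0) = 1 and E'(0) = −i√z satisfies | |E(L)| · e^{−L·Im √z} − 1 | ≤ C / |√z|. -/
open Set

/-- The derivative of the energy `‖P‖ ^ 2 + ‖Q‖ ^ 2` is controlled by the energy: `P` is damped, and
both amplitudes are driven by `g`. -/
lemma inner_energy_deriv_le {M : ℝ} {k P Q g u : ℂ} (hk : 1 ≤ ‖k‖) (him : 0 ≤ k.im) (hM : 0 ≤ M)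
    (hg : ‖g‖ ≤ M * ‖u‖) (hu : 2 * Complex.I * k * u = P - Q) :
    2 * inner ℝ P (g + 2 * Complex.I * k * P) + 2 * inner ℝ Q g
      ≤ 2 * M * (‖P‖ ^ 2 + ‖Q‖ ^ 2) := by
  have hdamp : inner ℝ P (2 * Complex.I * k * P) ≤ 0 := by
    have h : inner ℝ P (2 * Complex.I * k * P) = -(2 * k.im * (P.re ^ 2 + P.im ^ 2)) := by
      simp [Complex.inner]
      ring
    rw [h]
    have : 0 ≤ 2 * k.im * (P.re ^ 2 + P.im ^ 2) := by positivity
    linarith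
  have hnorm : 2 * ‖u‖ ≤ ‖P‖ + ‖Q‖ := by
    have h : 2 * ‖k‖ * ‖u‖ = ‖P - Q‖ := by
      rw [← hu]; simp
    have h2 := norm_sub_le P Q
    nlinarith [norm_nonneg u]
  have hPg : inner ℝ P g ≤ ‖P‖ * (M * ‖u‖) :=
    (real_inner_le_norm P g).trans (by gcongr)
  have hQg : inner ℝ Q g ≤ ‖Q‖ * (M * ‖u‖) :=
    (real_inner_le_norm Q g).trans (by gcongr)
  have hsum : (‖P‖ + ‖Q‖) * (2 * ‖u‖) ≤ 2 * (‖P‖ ^ 2 + ‖Q‖ ^ 2) :=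
    calc (‖P‖ + ‖Q‖) * (2 * ‖u‖) ≤ (‖P‖ + ‖Q‖) * (‖P‖ + ‖Q‖) := by gcongr
      _ ≤ 2 * (‖P‖ ^ 2 + ‖Q‖ ^ 2) := by nlinarith [sq_nonneg (‖P‖ - ‖Q‖)]
  rw [inner_add_right]
  nlinarith [mul_le_mul_of_nonneg_left hsum hM]

/-- Energy estimate for the first-order system satisfied by the two amplitudes. -/
lemma norm_le_two_mul_exp_of_amplitudes {L M : ℝ} {k : ℂ} {P Q g u : ℝ → ℂ}
    (hk : 1 ≤ ‖k‖) (him : 0 ≤ k.im) (hM : 0 ≤ M)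
    (hg : ∀ x ∈ Icc 0 L, ‖g x‖ ≤ M * ‖u x‖)
    (hP : ∀ x ∈ Icc 0 L, HasDerivWithinAt P (g x + 2 * Complex.I * k * P x) (Icc 0 L) x)
    (hQ : ∀ x ∈ Icc 0 L, HasDerivWithinAt Q (g x) (Icc 0 L) x)
    (hu : ∀ x ∈ Icc 0 L, 2 * Complex.I * k * u x = P x - Q x)
    (hP0 : P 0 = 0) (hQ0 : Q 0 = -(2 * Complex.I * k)) {x : ℝ} (hx : x ∈ Icc 0 L) :
    ‖u x‖ ≤ 2 * Real.exp (M * L) := by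
  set F : ℝ → ℝ := fun y ↦ (‖P y‖ ^ 2 + ‖Q y‖ ^ 2) * Real.exp (-(2 * M) * y) with hF
  have hFderiv : ∀ y ∈ Icc 0 L, HasDerivWithinAt F
      ((2 * inner ℝ (P y) (g y + 2 * Complex.I * k * P y) + 2 * inner ℝ (Q y) (g y)) *
          Real.exp (-(2 * M) * y) +
        (‖P y‖ ^ 2 + ‖Q y‖ ^ 2) * (Real.exp (-(2 * M) * y) * (-(2 * M) * 1))) (Icc 0 L) y :=
    fun y hy ↦ ((hP y hy).norm_sq.add (hQ y hy).norm_sq).mul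
      ((hasDerivAt_id y).const_mul (-(2 * M))).exp.hasDerivWithinAt
  have hanti : AntitoneOn F (Icc 0 L) := by
    refine antitoneOn_of_hasDerivWithinAt_nonpos (convex_Icc 0 L)
      (fun y hy ↦ (hFderiv y hy).continuousWithinAt)
      (fun y hy ↦ (hFderiv y (interior_subset hy)).mono interior_subset) fun y hy ↦ ?_
    have hy := interior_subset hy
    have h := mul_le_mul_of_nonneg_right
      (inner_energy_deriv_le hk him hM (hg y hy) (hu y hy)) (Real.exp_pos (-(2 * M) * y)).le
    linarith
  have hFx : F x ≤ F 0 := hanti ⟨le_rfl, hx.1.trans hx.2⟩ hx hx.1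
  have hF0 : F 0 = 4 * ‖k‖ ^ 2 := by
    simp [hF, hP0, hQ0]
    ring
  have henergy : ‖P x‖ ^ 2 + ‖Q x‖ ^ 2 ≤ 4 * ‖k‖ ^ 2 * Real.exp (M * L) ^ 2 := by
    have hexp : Real.exp (-(2 * M) * x) * Real.exp (2 * M * x) = 1 := by
      rw [← Real.exp_add]; simp
    calc ‖P x‖ ^ 2 + ‖Q x‖ ^ 2 = F x * Real.exp (2 * M * x) := by
          rw [hF]; simp only; rw [mul_assoc, hexp, mul_one]
      _ ≤ 4 * ‖k‖ ^ 2 * Real.exp (2 * (M * L)) := by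
          rw [← hF0]
          have : 0 ≤ F 0 := by rw [hF0]; positivity
          have := hx.2
          have : 2 * M * x ≤ 2 * (M * L) := by nlinarith
          gcongr
      _ = 4 * ‖k‖ ^ 2 * Real.exp (M * L) ^ 2 := by
          rw [← Real.exp_nat_mul]; simp
  have hnorm : 2 * ‖k‖ * ‖u x‖ = ‖P x - Q x‖ := by
    rw [← hu x hx]; simp
  have htri := norm_sub_le (P x) (Q x)
  have hsq : (2 * ‖k‖ * ‖u x‖) ^ 2 ≤ (2 * ‖k‖ * (2 * Real.exp (M * L))) ^ 2 := by
    have h1 : ‖P x - Q x‖ ^ 2 ≤ (‖P x‖ + ‖Q x‖) ^ 2 := by gcongr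
    have h2 : 0 ≤ ‖k‖ ^ 2 * Real.exp (M * L) ^ 2 := by positivity
    rw [hnorm]
    nlinarith [sq_nonneg (‖P x‖ - ‖Q x‖)]
  have hle := le_of_sq_le_sq hsq (by positivity)
  exact le_of_mul_le_mul_left hle (by positivity)

/-- Duhamel bound for a damped linear equation with zero initial value. -/
lemma norm_le_of_damped {L B : ℝ} {k : ℂ} {P g : ℝ → ℂ} (hL : 0 ≤ L) (him : 0 ≤ k.im)
    (hg : ∀ x ∈ Icc 0 L, ‖g x‖ ≤ B)
    (hP : ∀ x ∈ Icc 0 L, HasDerivWithinAt P (g x + 2 * Complex.I * k * P x) (Icc 0 L) x)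
    (hP0 : P 0 = 0) : ‖P L‖ ≤ B * L := by
  have hB : 0 ≤ B := (norm_nonneg _).trans (hg 0 ⟨le_rfl, hL⟩)
  set c : ℂ := 2 * Complex.I * k with hc
  have hcre : c.re = -(2 * k.im) := by simp [hc]
  have hexp : ∀ x : ℝ, ‖Complex.exp (-c * x)‖ = Real.exp (2 * k.im * x) := by
    intro x
    rw [Complex.norm_exp, Complex.re_mul_ofReal, Complex.neg_re, hcre, neg_neg]
  have hderiv : ∀ x ∈ Icc 0 L, HasDerivWithinAt (fun y : ℝ ↦ Complex.exp (-c * y) * P y)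
      (Complex.exp (-c * x) * g x) (Icc 0 L) x := by
    intro x hx
    have he : HasDerivAt (fun y : ℝ ↦ Complex.exp (-c * y))
        (Complex.exp (-c * x) * (-c * 1)) x :=
      ((Complex.ofRealCLM.hasDerivAt (x := x)).const_mul (-c)).cexp
    refine (he.hasDerivWithinAt.mul (hP x hx)).congr_deriv ?_
    ring
  have h := norm_image_sub_le_of_norm_deriv_le_segment' (C := Real.exp (2 * k.im * L) * B)
    hderiv (fun x hx ↦ by
      have hx' : x ≤ L := hx.2.le
      rw [norm_mul, hexp]
      have := hg x ⟨hx.1, hx'⟩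
      gcongr) L ⟨hL, le_rfl⟩
  simp only [hP0, mul_zero, sub_zero, norm_mul, hexp, mul_assoc (Real.exp _)] at h
  exact le_of_mul_le_mul_left h (Real.exp_pos _)

lemma norm_modulated_sub_one_le {L M : ℝ} {k : ℂ} {W : ℝ → ℝ} {E E' E'' : ℝ → ℂ}
    (hL : 0 ≤ L) (hk : 1 ≤ ‖k‖) (him : 0 ≤ k.im)
    (hW : ∀ x ∈ Icc 0 L, |W x| ≤ M)
    (hE : ∀ x ∈ Icc 0 L, HasDerivWithinAt E (E' x) (Icc 0 L) x)
    (hE' : ∀ x ∈ Icc 0 L, HasDerivWithinAt E' (E'' x) (Icc 0 L) x)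
    (heq : ∀ x ∈ Icc 0 L, -E'' x + (W x : ℂ) * E x = k ^ 2 * E x)
    (hE0 : E 0 = 1) (hE'0 : E' 0 = -Complex.I * k) :
    ‖Complex.exp (Complex.I * k * L) * E L - 1‖ ≤ 2 * M * L * Real.exp (M * L) / ‖k‖ := by
  have hM : 0 ≤ M := (abs_nonneg _).trans (hW 0 ⟨le_rfl, hL⟩)
  set e : ℝ → ℂ := fun x ↦ Complex.exp (Complex.I * k * x) with he
  set u : ℝ → ℂ := fun x ↦ e x * E x with hu
  set g : ℝ → ℂ := fun x ↦ W x * u x with hgdef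
  set P : ℝ → ℂ := fun x ↦ e x * (E' x + Complex.I * k * E x) with hPdef
  set Q : ℝ → ℂ := fun x ↦ e x * (E' x - Complex.I * k * E x) with hQdef
  have he' : ∀ x, HasDerivAt e (e x * (Complex.I * k * 1)) x := fun x ↦
    ((Complex.ofRealCLM.hasDerivAt (x := x)).const_mul (Complex.I * k)).cexp
  have hE'' : ∀ x ∈ Icc 0 L, E'' x = W x * E x + (Complex.I * k) ^ 2 * E x := by
    intro x hx
    rw [mul_pow, Complex.I_sq]
    linear_combination -(heq x hx)
  have hP : ∀ x ∈ Icc 0 L, HasDerivWithinAt P (g x + 2 * Complex.I * k * P x) (Icc 0 L) x := by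
    intro x hx
    refine ((he' x).hasDerivWithinAt.mul
      ((hE' x hx).add ((hE x hx).const_mul (Complex.I * k)))).congr_deriv ?_
    simp only [hgdef, hu, hPdef, Pi.add_apply, hE'' x hx]
    ring
  have hQ : ∀ x ∈ Icc 0 L, HasDerivWithinAt Q (g x) (Icc 0 L) x := by
    intro x hx
    refine ((he' x).hasDerivWithinAt.mul
      ((hE' x hx).sub ((hE x hx).const_mul (Complex.I * k)))).congr_deriv ?_
    simp only [hgdef, hu, Pi.sub_apply, hE'' x hx]
    ring
  have hrel : ∀ x ∈ Icc 0 L, 2 * Complex.I * k * u x = P x - Q x := fun x _ ↦ by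
    simp only [hu, hPdef, hQdef]; ring
  have he0 : e 0 = 1 := by simp [he]
  have hP0 : P 0 = 0 := by simp [hPdef, hE0, hE'0]
  have hQ0 : Q 0 = -(2 * Complex.I * k) := by
    simp only [hQdef, he0, hE0, hE'0]; ring
  have hg : ∀ x ∈ Icc 0 L, ‖g x‖ ≤ M * ‖u x‖ := fun x hx ↦ by
    rw [hgdef, norm_mul, Complex.norm_real, Real.norm_eq_abs]
    have := hW x hx
    gcongr
  have hgB : ∀ x ∈ Icc 0 L, ‖g x‖ ≤ M * (2 * Real.exp (M * L)) := fun x hx ↦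
    (hg x hx).trans (mul_le_mul_of_nonneg_left
      (norm_le_two_mul_exp_of_amplitudes hk him hM hg hP hQ hrel hP0 hQ0 hx) hM)
  have hPL := norm_le_of_damped hL him hgB hP hP0
  have hQL := norm_image_sub_le_of_norm_deriv_le_segment' hQ
    (fun x hx ↦ hgB x ⟨hx.1, hx.2.le⟩) L ⟨hL, le_rfl⟩
  have hmul : 2 * ‖k‖ * ‖u L - 1‖ = ‖P L - (Q L - Q 0)‖ := by
    have : P L - (Q L - Q 0) = 2 * Complex.I * k * (u L - 1) := by
      rw [hQ0]; linear_combination -(hrel L ⟨hL, le_rfl⟩)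
    rw [this]; simp
  have htri := norm_sub_le (P L) (Q L - Q 0)
  rw [le_div_iff₀ (by positivity)]
  change ‖u L - 1‖ * ‖k‖ ≤ _
  rw [sub_zero] at hQL
  linarith

lemma cpow_half_im_nonneg {z : ℂ} (hz : 0 < z.im) : 0 ≤ (z ^ (1 / 2 : ℂ)).im := by
  have hz0 : z ≠ 0 := by rintro rfl; simp at hz
  have him : (Complex.log z * (1 / 2)).im = z.arg / 2 := by
    rw [show (1 / 2 : ℂ) = ((1 / 2 : ℝ) : ℂ) by norm_num, Complex.im_mul_ofReal, Complex.log_im]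
    ring
  rw [Complex.cpow_def_of_ne_zero hz0, Complex.exp_im, him]
  have harg := Complex.arg_nonneg_iff.2 hz.le
  have := Complex.arg_le_pi z
  exact mul_nonneg (Real.exp_pos _).le
    (Real.sin_nonneg_of_nonneg_of_le_pi (by linarith) (by linarith))

/-- Let `0 < m ≤ M`. There is `C > 0` depending only on `m, M` such that
for every `L ∈ [m,M]`, continuous `W` with `‖W‖_∞ ≤ M`, and `z` with `Im z > 0`,
`|√z| ≥ 1`, the solution `E` of `−E'' + W E = z E` with `E(0)=1`, `E'(0) = −i√z`
satisfies `| |E(L)| e^{−L Im √z} − 1 | ≤ C / |√z|`. -/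
theorem abs_E_asymptotics
    (m M : ℝ) (hm : 0 < m) (hmM : m ≤ M) :
    ∃ C > (0:ℝ),
      ∀ L ∈ Icc m M, ∀ W : ℝ → ℝ, ContinuousOn W (Icc 0 L) →
        (∀ x ∈ Icc (0:ℝ) L, |W x| ≤ M) →
        ∀ z : ℂ, 0 < z.im → 1 ≤ ‖z ^ (1/2 : ℂ)‖ →
          ∀ E E' E'' : ℝ → ℂ,
            (∀ x ∈ Icc (0:ℝ) L, HasDerivWithinAt E (E' x) (Icc 0 L) x) →
            (∀ x ∈ Icc (0:ℝ) L, HasDerivWithinAt E' (E'' x) (Icc 0 L) x) →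
            ContinuousOn E'' (Icc 0 L) →
            (∀ x ∈ Icc (0:ℝ) L, -E'' x + (W x : ℂ) * E x = z * E x) →
            E 0 = 1 → E' 0 = -Complex.I * z ^ (1/2 : ℂ) →
            |‖E L‖ * Real.exp (-L * (z ^ (1/2 : ℂ)).im) - 1| ≤
              C / ‖z ^ (1/2 : ℂ)‖ := by
  have hM : 0 < M := hm.trans_le hmM
  refine ⟨2 * M * M * Real.exp (M * M), by positivity, ?_⟩
  intro L hL W _ hW z hz hk E E' E'' hE hE' _ heq hE0 hE'0
  have hsq : (z ^ (1 / 2 : ℂ)) ^ 2 = z := by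
    rw [← Complex.cpow_nat_mul]; simp
  have hL0 : 0 ≤ L := hm.le.trans hL.1
  have him := cpow_half_im_nonneg hz
  set k := z ^ (1 / 2 : ℂ)
  have hmain := norm_modulated_sub_one_le hL0 hk him hW hE hE' (by rwa [hsq]) hE0 hE'0
  have hnorm : ‖E L‖ * Real.exp (-L * k.im) = ‖Complex.exp (Complex.I * k * L) * E L‖ := by
    rw [norm_mul, Complex.norm_exp, mul_comm]
    congr 2
    simp
    ring
  have habs := abs_norm_sub_norm_le (Complex.exp (Complex.I * k * L) * E L) 1
  rw [norm_one] at habs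
  rw [hnorm]
  have hLM := hL.2
  refine (habs.trans hmain).trans ?_
  gcongr
end

section
/- Let L > 0, let W : [0,L] → ℝ be continuous with ‖W‖_∞ = sup_{x∈[0,L]} |W(x)|, and let z ∈ ℂ with Im z > 0 and |√z| ≥ 1. Let E be the twice continuously differentiable solution of −E'' + W E = z E on [0,L] with E(0) = 1 and E'(0) = −i√z. Then |E'(L) + i√z · E(L)| ≤ 3 ‖W‖_∞ e^{‖W‖_∞ L} · sinh(L · Im √z) / Im √z. -/
open Set

namespace SchrodingerBound

lemma cpow_half_sq (z : ℂ) : (z ^ (1/2 : ℂ)) ^ 2 = z := by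
  rw [← Complex.cpow_nat_mul]
  norm_num

lemma cpow_half_im_pos {z : ℂ} (hz : 0 < z.im) : 0 < (z ^ (1/2 : ℂ)).im := by
  have hz0 : z ≠ 0 := by
    rintro rfl
    simp at hz
  rw [Complex.cpow_def_of_ne_zero hz0, Complex.exp_im]
  have him : (Complex.log z * (1/2 : ℂ)).im = z.arg / 2 := by
    have h : (1/2 : ℂ) = ((1/2 : ℝ) : ℂ) := by norm_num
    rw [h, Complex.im_mul_ofReal, Complex.log_im]
    ring
  rw [him]
  have hpos : 0 < z.arg := by
    refine lt_of_le_of_ne (Complex.arg_nonneg_iff.2 hz.le) fun h => ?_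
    exact hz.ne' (Complex.arg_eq_zero_iff.1 h.symm).2
  have := Complex.arg_le_pi z
  exact mul_pos (Real.exp_pos _) (Real.sin_pos_of_pos_of_lt_pi (by linarith) (by linarith))

lemma norm_sin_le_exp_im {w : ℂ} (hw : 0 ≤ w.im) : ‖Complex.sin w‖ ≤ Real.exp w.im := by
  have h1 : ‖Complex.exp (-w * Complex.I)‖ = Real.exp w.im := by simp [Complex.norm_exp]
  have h2 : ‖Complex.exp (w * Complex.I)‖ ≤ Real.exp w.im := by
    simp only [Complex.norm_exp, Complex.mul_I_re]
    exact Real.exp_le_exp.2 (by linarith)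
  have h3 := norm_sub_le (Complex.exp (-w * Complex.I)) (Complex.exp (w * Complex.I))
  rw [Complex.sin, norm_div, norm_mul, Complex.norm_I, mul_one, Complex.norm_ofNat]
  linarith

/-- The a priori growth bound for the solution with data `(1, -ik)` of `-E'' + W E = k² E`. -/
lemma norm_solution_le {L M : ℝ} (hM : 0 ≤ M) {W : ℝ → ℝ}
    (hW : ∀ x ∈ Icc (0:ℝ) L, |W x| ≤ M) {k : ℂ} (hk : 0 ≤ k.im) (hk1 : 1 ≤ ‖k‖)
    {E E' E'' : ℝ → ℂ}
    (hE' : ∀ x ∈ Icc (0:ℝ) L, HasDerivWithinAt E (E' x) (Icc 0 L) x)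
    (hE'' : ∀ x ∈ Icc (0:ℝ) L, HasDerivWithinAt E' (E'' x) (Icc 0 L) x)
    (hode : ∀ x ∈ Icc (0:ℝ) L, -E'' x + (W x : ℂ) * E x = k ^ 2 * E x)
    (hE0 : E 0 = 1) (hE'0 : E' 0 = -Complex.I * k) {x : ℝ} (hx : x ∈ Icc (0:ℝ) L) :
    ‖E x‖ ≤ Real.exp (k.im * x) * Real.exp (M * x) := by
  have hL : 0 ≤ L := hx.1.trans hx.2
  have hk0 : k ≠ 0 := by
    rintro rfl
    norm_num at hk1
  have hEc : ContinuousOn E (Icc 0 L) := fun y hy => (hE' y hy).continuousWithinAt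
  set u : ℝ → ℝ := IccExtend hL (fun t : Icc (0:ℝ) L => Real.exp (-(k.im * t)) * ‖E t‖) with hu
  have huc : Continuous u := by
    refine Continuous.Icc_extend' ?_
    have h := hEc.domRestrict
    exact (by fun_prop : Continuous fun t : Icc (0:ℝ) L => Real.exp (-(k.im * t))).mul h.norm
  have hueq : ∀ t ∈ Icc (0:ℝ) L, u t = Real.exp (-(k.im * t)) * ‖E t‖ := fun t ht =>
    IccExtend_of_mem hL _ ht
  set Φ : ℝ → ℝ := fun t => 1 + M * ∫ s in (0:ℝ)..t, u s with hΦ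
  have hΦd : ∀ t, HasDerivAt Φ (M * u t) t := fun t =>
    ((huc.integral_hasStrictDerivAt 0 t).hasDerivAt.const_mul M).const_add 1
  have hΦ0 : Φ 0 = 1 := by simp [hΦ]
  have huΦ : ∀ y ∈ Icc (0:ℝ) L, u y ≤ Φ y := by
    intro y hy
    have hsub : Icc (0:ℝ) y ⊆ Icc 0 L := Icc_subset_Icc le_rfl hy.2
    set p : ℝ → ℂ := fun t => Complex.cos (k * (y - t)) * E t +
      Complex.sin (k * (y - t)) / k * E' t with hp
    have hpd : ∀ t ∈ Icc (0:ℝ) y, HasDerivWithinAt p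
        (Complex.sin (k * (y - t)) / k * (W t * E t)) (Icc 0 y) t := by
      intro t ht
      have hw : HasDerivAt (fun s : ℝ => k * ((y:ℂ) - s)) (-k) t := by
        simpa using ((Complex.ofRealCLM.hasDerivAt (x := t)).const_sub (y:ℂ)).const_mul k
      have hsin : HasDerivAt (fun s : ℝ => Complex.sin (k * ((y:ℂ) - s)) / k)
          (Complex.cos (k * (y - t)) * -k / k) t :=
        ((Complex.hasDerivAt_sin _).comp t hw).div_const k
      have hcos : HasDerivAt (fun s : ℝ => Complex.cos (k * ((y:ℂ) - s)))
          (-Complex.sin (k * (y - t)) * -k) t :=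
        (Complex.hasDerivAt_cos _).comp t hw
      have h := (hcos.hasDerivWithinAt.mul ((hE' t (hsub ht)).mono hsub)).add
        (hsin.hasDerivWithinAt.mul ((hE'' t (hsub ht)).mono hsub))
      refine h.congr_deriv ?_
      have h2 : E'' t = W t * E t - k ^ 2 * E t := by linear_combination -hode t (hsub ht)
      rw [h2]
      field_simp
      ring
    have key := image_norm_le_of_norm_deriv_right_le_deriv_boundary (f := p) (a := 0) (b := y)
      (B := fun t => Real.exp (k.im * y) * Φ t) (B' := fun t => Real.exp (k.im * y) * (M * u t))
      (f' := fun t => Complex.sin (k * (y - t)) / k * (W t * E t))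
      (fun t ht => (hpd t ht).continuousWithinAt)
      (fun t ht => ((hpd t (Ico_subset_Icc_self ht)).mono_of_mem_nhdsWithin
        (Icc_mem_nhdsGE_of_mem ht)))
      ?_ (fun t => (hΦd t).const_mul _) ?_ (right_mem_Icc.2 hy.1)
    · have hpy : p y = E y := by simp [hp]
      rw [hpy] at key
      rw [hueq y hy]
      calc Real.exp (-(k.im * y)) * ‖E y‖
          ≤ Real.exp (-(k.im * y)) * (Real.exp (k.im * y) * Φ y) := by gcongr
        _ = Φ y := by rw [← mul_assoc, ← Real.exp_add]; simp
    · have hp0 : p 0 = Complex.exp (-(k * y) * Complex.I) := by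
        simp only [hp, hE0, hE'0, Complex.exp_mul_I, Complex.cos_neg, Complex.sin_neg]
        simp
        field_simp
      rw [hp0, hΦ0, Complex.norm_exp]
      simp
    · intro t ht
      have htL : t ∈ Icc (0:ℝ) L := hsub (Ico_subset_Icc_self ht)
      have him : (k * ((y:ℂ) - t)).im = k.im * (y - t) := by
        rw [← Complex.ofReal_sub, Complex.im_mul_ofReal]
      have hs : ‖Complex.sin (k * (y - t))‖ ≤ Real.exp (k.im * (y - t)) := by
        rw [← him]
        exact norm_sin_le_exp_im (him ▸ mul_nonneg hk (by linarith [ht.2]))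
      rw [norm_mul, norm_div, norm_mul, Complex.norm_real, Real.norm_eq_abs, hueq t htL]
      calc ‖Complex.sin (k * (y - t))‖ / ‖k‖ * (|W t| * ‖E t‖)
          ≤ Real.exp (k.im * (y - t)) * (M * ‖E t‖) := by
            gcongr
            · exact (div_le_self (norm_nonneg _) hk1).trans hs
            · exact hW t htL
        _ = _ := by
            rw [mul_sub, sub_eq_add_neg, Real.exp_add]
            ring
  have hu0 : ∀ t ∈ Icc (0:ℝ) L, 0 ≤ u t := fun t ht => by
    rw [hueq t ht]
    positivity
  have hgr := norm_le_gronwallBound_of_norm_deriv_right_le (f := Φ) (f' := fun t => M * u t)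
    (δ := 1) (K := M) (ε := 0) (a := 0) (b := L)
    (fun t _ => (hΦd t).continuousAt.continuousWithinAt)
    (fun t _ => (hΦd t).hasDerivWithinAt) (by simp [hΦ0])
    (fun t ht => by
      have htL := Ico_subset_Icc_self ht
      rw [Real.norm_eq_abs, abs_of_nonneg (mul_nonneg hM (hu0 t htL)), add_zero]
      exact mul_le_mul_of_nonneg_left ((huΦ t htL).trans (le_abs_self _)) hM) x hx
  rw [gronwallBound_ε0, sub_zero, one_mul] at hgr
  have hux := ((huΦ x hx).trans (le_abs_self _)).trans hgr
  rw [hueq x hx] at hux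
  calc ‖E x‖ = Real.exp (k.im * x) * (Real.exp (-(k.im * x)) * ‖E x‖) := by
        rw [← mul_assoc, ← Real.exp_add]; simp
    _ ≤ _ := by gcongr

/-- Duhamel bound for `E' + ikE`, which satisfies `F' = ikF + W E` and vanishes at `0`. -/
lemma norm_deriv_add_le {L M : ℝ} (hL : 0 ≤ L) (hM : 0 ≤ M) {W : ℝ → ℝ}
    (hW : ∀ x ∈ Icc (0:ℝ) L, |W x| ≤ M) {k : ℂ} (hk : 0 < k.im) (hk1 : 1 ≤ ‖k‖)
    {E E' E'' : ℝ → ℂ}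
    (hE' : ∀ x ∈ Icc (0:ℝ) L, HasDerivWithinAt E (E' x) (Icc 0 L) x)
    (hE'' : ∀ x ∈ Icc (0:ℝ) L, HasDerivWithinAt E' (E'' x) (Icc 0 L) x)
    (hode : ∀ x ∈ Icc (0:ℝ) L, -E'' x + (W x : ℂ) * E x = k ^ 2 * E x)
    (hE0 : E 0 = 1) (hE'0 : E' 0 = -Complex.I * k) :
    ‖E' L + Complex.I * k * E L‖ ≤ M * Real.exp (M * L) * Real.sinh (L * k.im) / k.im := by
  set q : ℝ → ℂ := fun t => Complex.exp (Complex.I * k * (L - t)) *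
    (E' t + Complex.I * k * E t) with hq
  have hqd : ∀ t ∈ Icc (0:ℝ) L, HasDerivWithinAt q
      (Complex.exp (Complex.I * k * (L - t)) * (W t * E t)) (Icc 0 L) t := by
    intro t ht
    have hw : HasDerivAt (fun s : ℝ => Complex.I * k * ((L:ℂ) - s)) (-(Complex.I * k)) t := by
      simpa using ((Complex.ofRealCLM.hasDerivAt (x := t)).const_sub (L:ℂ)).const_mul
        (Complex.I * k)
    refine (hw.cexp.hasDerivWithinAt.mul
      ((hE'' t ht).add ((hE' t ht).const_mul (Complex.I * k)))).congr_deriv ?_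
    have h2 : E'' t = W t * E t - k ^ 2 * E t := by linear_combination -hode t ht
    simp only [Pi.add_apply]
    rw [h2]
    linear_combination (-Complex.exp (Complex.I * k * (L - t)) * k ^ 2 * E t) * Complex.I_sq
  set C : ℝ := M * Real.exp (M * L) * Real.exp (-(k.im * L)) with hC
  have hBd : ∀ t : ℝ, HasDerivAt
      (fun t => C * ((Real.exp (2 * k.im * t) - 1) / (2 * k.im)))
      (C * Real.exp (2 * k.im * t)) t := by
    intro t
    have h := (((((hasDerivAt_id t).const_mul (2 * k.im)).exp).sub_const 1).div_const
      (2 * k.im)).const_mul C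
    refine h.congr_deriv ?_
    simp only [id]
    field_simp
  have key := image_norm_le_of_norm_deriv_right_le_deriv_boundary (f := q) (a := 0) (b := L)
    (f' := fun t => Complex.exp (Complex.I * k * (L - t)) * (W t * E t))
    (fun t ht => (hqd t ht).continuousWithinAt)
    (fun t ht => ((hqd t (Ico_subset_Icc_self ht)).mono_of_mem_nhdsWithin
      (Icc_mem_nhdsGE_of_mem ht)))
    (by simp [hq, hE0, hE'0]) hBd ?_ (right_mem_Icc.2 hL)
  · have hqL : q L = E' L + Complex.I * k * E L := by simp [hq]
    rw [hqL] at key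
    refine key.trans_eq ?_
    have h1 : Real.exp (2 * k.im * L) = Real.exp (L * k.im) * Real.exp (L * k.im) := by
      rw [← Real.exp_add]; ring_nf
    have h2 : Real.exp (-(L * k.im)) * Real.exp (L * k.im) = 1 := by
      rw [← Real.exp_add]; simp
    rw [hC, h1, Real.sinh_eq, mul_comm k.im L]
    field_simp
    linear_combination (M * Real.exp (L * k.im)) * h2
  · intro t ht
    have htL := Ico_subset_Icc_self ht
    have hexp : ‖Complex.exp (Complex.I * k * (L - t))‖ = Real.exp (-(k.im * (L - t))) := by
      rw [Complex.norm_exp, ← Complex.ofReal_sub, Complex.re_mul_ofReal, Complex.I_mul_re]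
      ring_nf
    rw [norm_mul, norm_mul, hexp, Complex.norm_real, Real.norm_eq_abs]
    calc Real.exp (-(k.im * (L - t))) * (|W t| * ‖E t‖)
        ≤ Real.exp (-(k.im * (L - t))) * (M * (Real.exp (k.im * t) * Real.exp (M * L))) := by
          gcongr
          · exact hW t htL
          · refine (norm_solution_le hM hW hk.le hk1 hE' hE'' hode hE0 hE'0 htL).trans ?_
            gcongr
            exact htL.2
      _ = _ := by
          have h1 : Real.exp (-(k.im * (L - t))) = Real.exp (-(k.im * L)) * Real.exp (k.im * t) := by
            rw [← Real.exp_add]; ring_nf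
          have h2 : Real.exp (2 * k.im * t) = Real.exp (k.im * t) * Real.exp (k.im * t) := by
            rw [← Real.exp_add]; ring_nf
          rw [h1, h2, hC]
          ring

end SchrodingerBound

/-- Let `E` solve `−E'' + W E = z E` on `[0,L]` with `E(0)=1`,
`E'(0) = −i√z`, where `Im z > 0` and `|√z| ≥ 1`. With `‖W‖_∞ = sup_{[0,L]} |W|`, one has
`|E'(L) + i√z E(L)| ≤ 3 ‖W‖_∞ e^{‖W‖_∞ L} sinh(L Im √z) / Im √z`. -/
theorem derivative_combination_bound
    (L : ℝ) (hL : 0 < L) (W : ℝ → ℝ) (hW : ContinuousOn W (Icc 0 L))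
    (Wsup : ℝ) (hWsup : Wsup = sSup ((fun x => |W x|) '' Icc 0 L))
    (z : ℂ) (hz : 0 < z.im) (hz' : 1 ≤ ‖z ^ (1/2 : ℂ)‖)
    (E E' E'' : ℝ → ℂ)
    (hE' : ∀ x ∈ Icc (0:ℝ) L, HasDerivWithinAt E (E' x) (Icc 0 L) x)
    (hE'' : ∀ x ∈ Icc (0:ℝ) L, HasDerivWithinAt E' (E'' x) (Icc 0 L) x)
    (hE''cont : ContinuousOn E'' (Icc 0 L))
    (hode : ∀ x ∈ Icc (0:ℝ) L, -E'' x + (W x : ℂ) * E x = z * E x)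
    (hE0 : E 0 = 1) (hE'0 : E' 0 = -Complex.I * z ^ (1/2 : ℂ)) :
    ‖E' L + Complex.I * z ^ (1/2 : ℂ) * E L‖ ≤
      3 * Wsup * Real.exp (Wsup * L) *
        Real.sinh (L * (z ^ (1/2 : ℂ)).im) / (z ^ (1/2 : ℂ)).im := by
  have hbdd : ∀ x ∈ Icc (0:ℝ) L, |W x| ≤ Wsup := fun x hx =>
    hWsup ▸ le_csSup (isCompact_Icc.image_of_continuousOn hW.abs).bddAbove (mem_image_of_mem _ hx)
  have hM : 0 ≤ Wsup := (abs_nonneg _).trans (hbdd 0 (left_mem_Icc.2 hL.le))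
  have hk := SchrodingerBound.cpow_half_im_pos hz
  have hsinh : 0 ≤ Real.sinh (L * (z ^ (1/2 : ℂ)).im) :=
    Real.sinh_nonneg_iff.2 (mul_pos hL hk).le
  refine (SchrodingerBound.norm_deriv_add_le hL.le hM hbdd hk hz' hE' hE''
    (by simpa only [SchrodingerBound.cpow_half_sq] using hode) hE0 hE'0).trans ?_
  gcongr
  linarith
end

section
/- Let ζ > 0, let W : [0,ζ] → ℝ be continuous, and let z ∈ ℂ. Let C and S be the twice continuously differentiable solutions of −u'' + W u = z u on [0,ζ] with C(0) = 1, C'(0) = 0, S(0) = 0, S'(0) = 1, and set Σ₁ = ∫₀^ζ |S(x)|² dx, Σ₂ = ∫₀^ζ |C(x)|² dx, Σ₃ = ∫₀^ζ C(x)·conj(S(x)) dx. Then Σ₁Σ₂ − |Σ₃|² > 0, and for every twice continuously differentiable solution f of −f'' + W f = z f on [0,ζ], one has f(0) = (Σ₁Σ₂ − |Σ₃|²)⁻¹ ∫₀^ζ ( Σ₁·conj(C(x)) − conj(Σ₃)·conj(S(x)) ) f(x) dx and f'(0) = (Σ₁Σ₂ − |Σ₃|²)⁻¹ ∫₀^ζ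 ( Σ₂·conj(S(x)) − Σ₃·conj(C(x)) ) f(x) dx. -/
open Set

/-- The Wronskian of two solutions of `−u'' + W u = z u` is constant. -/
lemma wronskian_eq_initial {ζ : ℝ} {W : ℝ → ℝ} {z : ℂ} {g g' g'' h h' h'' : ℝ → ℂ}
    (hg' : ∀ x ∈ Icc (0:ℝ) ζ, HasDerivWithinAt g (g' x) (Icc 0 ζ) x)
    (hg'' : ∀ x ∈ Icc (0:ℝ) ζ, HasDerivWithinAt g' (g'' x) (Icc 0 ζ) x)
    (hg : ∀ x ∈ Icc (0:ℝ) ζ, -g'' x + (W x : ℂ) * g x = z * g x)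
    (hh' : ∀ x ∈ Icc (0:ℝ) ζ, HasDerivWithinAt h (h' x) (Icc 0 ζ) x)
    (hh'' : ∀ x ∈ Icc (0:ℝ) ζ, HasDerivWithinAt h' (h'' x) (Icc 0 ζ) x)
    (hh : ∀ x ∈ Icc (0:ℝ) ζ, -h'' x + (W x : ℂ) * h x = z * h x) :
    ∀ x ∈ Icc (0:ℝ) ζ, g x * h' x - g' x * h x = g 0 * h' 0 - g' 0 * h 0 := by
  have hderiv : ∀ x ∈ Icc (0:ℝ) ζ,
      HasDerivWithinAt (fun y => g y * h' y - g' y * h y) 0 (Icc 0 ζ) x := by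
    intro x hx
    refine (((hg' x hx).mul (hh'' x hx)).sub ((hg'' x hx).mul (hh' x hx))).congr_deriv ?_
    linear_combination h x * hg x hx - g x * hh x hx
  refine constant_of_has_deriv_right_zero (fun x hx => (hderiv x hx).continuousWithinAt) ?_
  intro x hx
  exact (hderiv x (Ico_subset_Icc_self hx)).mono_of_mem_nhdsWithin (Icc_mem_nhdsGE_of_mem hx)

/-- Pairing a combination of conjugates of `C, S` with a combination of `C, S`, in terms of the
Gram matrix entries of `C, S`. -/
lemma integral_conj_combination_mul {ζ : ℝ} (hζ : 0 ≤ ζ) {C S g : ℝ → ℂ}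
    (hC : ContinuousOn C (Icc 0 ζ)) (hS : ContinuousOn S (Icc 0 ζ)) (a b c d : ℂ)
    (hg : ∀ x ∈ Icc (0:ℝ) ζ, g x = a * C x + b * S x) :
    ∫ x in (0:ℝ)..ζ, (c * starRingEnd ℂ (C x) - d * starRingEnd ℂ (S x)) * g x =
      a * (c * ((∫ x in (0:ℝ)..ζ, ‖C x‖ ^ 2 : ℝ) : ℂ)
          - d * ∫ x in (0:ℝ)..ζ, C x * starRingEnd ℂ (S x))
        + b * (c * starRingEnd ℂ (∫ x in (0:ℝ)..ζ, C x * starRingEnd ℂ (S x))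
          - d * ((∫ x in (0:ℝ)..ζ, ‖S x‖ ^ 2 : ℝ) : ℂ)) := by
  have hint : ∀ {u v : ℝ → ℂ}, ContinuousOn u (Icc 0 ζ) → ContinuousOn v (Icc 0 ζ) →
      IntervalIntegrable (fun x => u x * starRingEnd ℂ (v x)) MeasureTheory.volume 0 ζ :=
    fun hu hv => ContinuousOn.intervalIntegrable_of_Icc hζ
      (hu.mul (Complex.continuous_conj.comp_continuousOn hv))
  have hsq : ∀ u : ℝ → ℂ, ((∫ x in (0:ℝ)..ζ, ‖u x‖ ^ 2 : ℝ) : ℂ) =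
      ∫ x in (0:ℝ)..ζ, u x * starRingEnd ℂ (u x) := by
    intro u
    rw [← intervalIntegral.integral_ofReal]
    simp [Complex.mul_conj']
  have hconj : starRingEnd ℂ (∫ x in (0:ℝ)..ζ, C x * starRingEnd ℂ (S x)) =
      ∫ x in (0:ℝ)..ζ, S x * starRingEnd ℂ (C x) := by
    rw [intervalIntegral.integral_of_le hζ, intervalIntegral.integral_of_le hζ, ← integral_conj]
    simp [mul_comm]
  have hexpand : ∫ x in (0:ℝ)..ζ, (c * starRingEnd ℂ (C x) - d * starRingEnd ℂ (S x)) * g x =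
      ∫ x in (0:ℝ)..ζ, ((a * c * (C x * starRingEnd ℂ (C x)) -
        a * d * (C x * starRingEnd ℂ (S x))) + (b * c * (S x * starRingEnd ℂ (C x)) -
        b * d * (S x * starRingEnd ℂ (S x)))) := by
    refine intervalIntegral.integral_congr fun x hx => ?_
    rw [uIcc_of_le hζ] at hx
    simp only [hg x hx]
    ring
  have hCC := (hint hC hC).const_mul (a * c)
  have hCS := (hint hC hS).const_mul (a * d)
  have hSC := (hint hS hC).const_mul (b * c)
  have hSS := (hint hS hS).const_mul (b * d)
  rw [hexpand, hsq, hsq, hconj, intervalIntegral.integral_add (hCC.sub hCS) (hSC.sub hSS),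
    intervalIntegral.integral_sub hCC hCS, intervalIntegral.integral_sub hSC hSS]
  simp only [intervalIntegral.integral_const_mul]
  ring

lemma integral_norm_sq_pos {ζ : ℝ} (hζ : 0 < ζ) {u : ℝ → ℂ} (hu : ContinuousOn u (Icc 0 ζ))
    (hne : ∃ x ∈ Icc (0:ℝ) ζ, u x ≠ 0) : 0 < ∫ x in (0:ℝ)..ζ, ‖u x‖ ^ 2 := by
  obtain ⟨x, hx, hux⟩ := hne
  exact intervalIntegral.integral_pos hζ (hu.norm.pow 2) (fun _ _ => by positivity)
    ⟨x, hx, by positivity⟩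

/-- Let `C, S` be the fundamental solutions of `−u'' + W u = z u` on
`[0,ζ]` with `C(0)=1, C'(0)=0, S(0)=0, S'(0)=1`, and set
`Sig1 = ∫₀^ζ |S|², Sig2 = ∫₀^ζ |C|², Sig3 = ∫₀^ζ C·conj S`. Then `Sig1Sig2 − |Sig3|² > 0`, and every
solution `f` of the same equation satisfies the two displayed reconstruction formulas for
`f(0)` and `f'(0)`. -/
theorem boundary_data_from_L2_pairings
    (ζ : ℝ) (hζ : 0 < ζ) (W : ℝ → ℝ) (hW : ContinuousOn W (Icc 0 ζ)) (z : ℂ)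
    (Cf Cf' Cf'' Sf Sf' Sf'' : ℝ → ℂ)
    (hCf' : ∀ x ∈ Icc (0:ℝ) ζ, HasDerivWithinAt Cf (Cf' x) (Icc 0 ζ) x)
    (hCf'' : ∀ x ∈ Icc (0:ℝ) ζ, HasDerivWithinAt Cf' (Cf'' x) (Icc 0 ζ) x)
    (hCcont : ContinuousOn Cf'' (Icc 0 ζ))
    (hCode : ∀ x ∈ Icc (0:ℝ) ζ, -Cf'' x + (W x : ℂ) * Cf x = z * Cf x)
    (hC0 : Cf 0 = 1) (hC'0 : Cf' 0 = 0)
    (hSf' : ∀ x ∈ Icc (0:ℝ) ζ, HasDerivWithinAt Sf (Sf' x) (Icc 0 ζ) x)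
    (hSf'' : ∀ x ∈ Icc (0:ℝ) ζ, HasDerivWithinAt Sf' (Sf'' x) (Icc 0 ζ) x)
    (hScont : ContinuousOn Sf'' (Icc 0 ζ))
    (hSode : ∀ x ∈ Icc (0:ℝ) ζ, -Sf'' x + (W x : ℂ) * Sf x = z * Sf x)
    (hS0 : Sf 0 = 0) (hS'0 : Sf' 0 = 1)
    (Sig1 Sig2 : ℝ) (Sig3 : ℂ)
    (hSig1 : Sig1 = ∫ x in (0:ℝ)..ζ, ‖Sf x‖ ^ 2)
    (hSig2 : Sig2 = ∫ x in (0:ℝ)..ζ, ‖Cf x‖ ^ 2)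
    (hSig3 : Sig3 = ∫ x in (0:ℝ)..ζ, Cf x * starRingEnd ℂ (Sf x)) :
    0 < Sig1 * Sig2 - ‖Sig3‖ ^ 2 ∧
    ∀ f f' f'' : ℝ → ℂ,
      (∀ x ∈ Icc (0:ℝ) ζ, HasDerivWithinAt f (f' x) (Icc 0 ζ) x) →
      (∀ x ∈ Icc (0:ℝ) ζ, HasDerivWithinAt f' (f'' x) (Icc 0 ζ) x) →
      ContinuousOn f'' (Icc 0 ζ) →
      (∀ x ∈ Icc (0:ℝ) ζ, -f'' x + (W x : ℂ) * f x = z * f x) →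
      f 0 = ((Sig1 * Sig2 - ‖Sig3‖ ^ 2 : ℝ) : ℂ)⁻¹ *
          ∫ x in (0:ℝ)..ζ,
            ((Sig1 : ℂ) * starRingEnd ℂ (Cf x) - starRingEnd ℂ Sig3 * starRingEnd ℂ (Sf x)) *
              f x ∧
      f' 0 = ((Sig1 * Sig2 - ‖Sig3‖ ^ 2 : ℝ) : ℂ)⁻¹ *
          ∫ x in (0:ℝ)..ζ,
            ((Sig2 : ℂ) * starRingEnd ℂ (Sf x) - Sig3 * starRingEnd ℂ (Cf x)) * f x := by
  have hC : ContinuousOn Cf (Icc 0 ζ) := fun x hx => (hCf' x hx).continuousWithinAt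
  have hS : ContinuousOn Sf (Icc 0 ζ) := fun x hx => (hSf' x hx).continuousWithinAt
  have h0 : (0:ℝ) ∈ Icc 0 ζ := left_mem_Icc.2 hζ.le
  have hpair := fun {g : ℝ → ℂ} => integral_conj_combination_mul (g := g) hζ.le hC hS
  have hSig1_pos : 0 < Sig1 := by
    rw [hSig1]
    refine integral_norm_sq_pos hζ hS ?_
    by_contra! hzero
    have hder : HasDerivWithinAt Sf 0 (Icc 0 ζ) 0 :=
      (hasDerivWithinAt_const 0 (Icc 0 ζ) (0:ℂ)).congr hzero hS0
    have heq := (uniqueDiffOn_Icc hζ 0 h0).eq_deriv _ (hSf' 0 h0) hder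
    rw [hS'0] at heq
    exact one_ne_zero heq
  simp only [← hSig1, ← hSig2, ← hSig3] at hpair
  have hdet : ((Sig1 * Sig2 - ‖Sig3‖ ^ 2 : ℝ) : ℂ) = Sig1 * Sig2 - Sig3 * starRingEnd ℂ Sig3 := by
    rw [Complex.mul_conj']
    push_cast
    ring
  have hpos : 0 < Sig1 * Sig2 - ‖Sig3‖ ^ 2 := by
    have hres_pos : 0 < ∫ x in (0:ℝ)..ζ, ‖(Sig1 : ℂ) * Cf x - Sig3 * Sf x‖ ^ 2 :=
      integral_norm_sq_pos hζ ((hC.const_mul _).sub (hS.const_mul _))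
        ⟨0, h0, by simp [hC0, hS0, hSig1_pos.ne']⟩
    have hres : ((∫ x in (0:ℝ)..ζ, ‖(Sig1 : ℂ) * Cf x - Sig3 * Sf x‖ ^ 2 : ℝ) : ℂ) =
        ((Sig1 * (Sig1 * Sig2 - ‖Sig3‖ ^ 2) : ℝ) : ℂ) := by
      have hgram := hpair (Sig1 : ℂ) (-Sig3) (Sig1 : ℂ) (starRingEnd ℂ Sig3)
        (g := fun x => (Sig1 : ℂ) * Cf x - Sig3 * Sf x) (fun x _ => by ring)
      rw [Complex.ofReal_mul, hdet, ← intervalIntegral.integral_ofReal]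
      calc _ = _ := intervalIntegral.integral_congr fun x _ => by
            simp [← Complex.conj_mul']
        _ = _ := hgram
        _ = _ := by ring
    rw [Complex.ofReal_inj.1 hres] at hres_pos
    exact pos_of_mul_pos_right hres_pos hSig1_pos.le
  refine ⟨hpos, fun f f' f'' hf' hf'' _ hf => ?_⟩
  have hcomb : ∀ x ∈ Icc (0:ℝ) ζ, f x = f 0 * Cf x + f' 0 * Sf x := by
    intro x hx
    have hCS := wronskian_eq_initial hCf' hCf'' hCode hSf' hSf'' hSode x hx
    have hfC := wronskian_eq_initial hf' hf'' hf hCf' hCf'' hCode x hx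
    have hfS := wronskian_eq_initial hf' hf'' hf hSf' hSf'' hSode x hx
    simp only [hC0, hC'0, hS0, hS'0] at hCS hfC hfS
    linear_combination Cf x * hfS - Sf x * hfC - f x * hCS
  have hne : ((Sig1 * Sig2 - ‖Sig3‖ ^ 2 : ℝ) : ℂ) ≠ 0 := Complex.ofReal_ne_zero.2 hpos.ne'
  constructor
  · rw [eq_inv_mul_iff_mul_eq₀ hne, hdet, hpair _ _ _ _ hcomb]
    ring
  · have hswap : ∫ x in (0:ℝ)..ζ,
          ((Sig2 : ℂ) * starRingEnd ℂ (Sf x) - Sig3 * starRingEnd ℂ (Cf x)) * f x =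
        ∫ x in (0:ℝ)..ζ,
          (-Sig3 * starRingEnd ℂ (Cf x) - -(Sig2 : ℂ) * starRingEnd ℂ (Sf x)) * f x := by
      congr 1 with x
      ring
    rw [eq_inv_mul_iff_mul_eq₀ hne, hdet, hswap, hpair _ _ _ _ hcomb]
    ring
end

section
/- Let a > 0 and let χ : ℝ → ℝ be smooth with compact support contained in (−a, a). Define χ̃(x + iy) = χ(x) + i y χ'(x) − (y²/2) χ''(x), and for ε ∈ (0,1], λ ∈ ℝ, x ∈ ℝ set f_ε(λ, x) = (1 + x(λ + iε)) · (χ̃(λ + iε) − χ(λ)) / (x − λ − iε). Then there exists a constant C > 0, depending only on a and χ, such that for every x ∈ ℝ and every ε ∈ (0, 1]: | ∫_{−a}^{a} f_ε(λ, x) dλ | ≤ C √ε. -/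
open Set Real

/-- The Poisson kernel has integral at most `π` over any interval. -/
lemma integral_poissonKernel_le_pi (x a b ε : ℝ) (hε : 0 < ε) :
    IntervalIntegrable (fun t : ℝ => ε / ((x - t) ^ 2 + ε ^ 2)) MeasureTheory.volume a b ∧
      ∫ t in a..b, ε / ((x - t) ^ 2 + ε ^ 2) ≤ π := by
  have hpos : ∀ t : ℝ, 0 < (x - t) ^ 2 + ε ^ 2 := fun t => by positivity
  have hcont : Continuous fun t : ℝ => ε / ((x - t) ^ 2 + ε ^ 2) :=
    continuous_const.div (by fun_prop) fun t => (hpos t).ne'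
  have hderiv : ∀ t : ℝ, HasDerivAt (fun t : ℝ => arctan ((t - x) / ε))
      (ε / ((x - t) ^ 2 + ε ^ 2)) t := fun t => by
    convert (((hasDerivAt_id' t).sub_const x).div_const ε).arctan using 1
    have h := (hpos t).ne'
    have h' : 1 + ((t - x) / ε) ^ 2 = ((x - t) ^ 2 + ε ^ 2) / ε ^ 2 := by
      field_simp
      ring
    rw [h']
    field_simp
  refine ⟨hcont.intervalIntegrable a b, ?_⟩
  rw [intervalIntegral.integral_eq_sub_of_hasDerivAt (fun t _ => hderiv t)
    (hcont.intervalIntegrable a b)]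
  linarith [arctan_lt_pi_div_two ((b - x) / ε), neg_pi_div_two_lt_arctan ((a - x) / ε)]

/-- The distance from `x` to `z` in the denominator is traded for the Poisson kernel. -/
lemma eps_div_norm_le_sqrt_mul (x t ε : ℝ) (hε : 0 < ε) :
    ε / ‖(x : ℂ) - ((t : ℂ) + (ε : ℂ) * Complex.I)‖ ≤
      √ε * (1 + ε / ((x - t) ^ 2 + ε ^ 2)) := by
  set r := ‖(x : ℂ) - ((t : ℂ) + (ε : ℂ) * Complex.I)‖
  have hr : r ^ 2 = (x - t) ^ 2 + ε ^ 2 := by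
    simp only [r, ← Complex.normSq_eq_norm_sq, Complex.normSq_apply]
    simp
    ring
  have hr0 : 0 < r := by
    refine lt_of_le_of_ne (norm_nonneg _) fun h => ?_
    rw [← h] at hr
    nlinarith [sq_nonneg (x - t)]
  have hs := Real.sq_sqrt hε.le
  have hs0 := Real.sqrt_pos.2 hε
  rw [← hr]
  have key : √ε / r ≤ 1 + (√ε / r) ^ 2 := by nlinarith [sq_nonneg (√ε / r - 1)]
  calc ε / r = √ε * (√ε / r) := by rw [← mul_div_assoc, ← sq, hs]
    _ ≤ √ε * (1 + (√ε / r) ^ 2) := by gcongr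
    _ = √ε * (1 + ε / r ^ 2) := by rw [div_pow, hs]

/-- The Herglotz kernel splits into a bounded part and a multiple of the Cauchy kernel. -/
lemma norm_herglotzKernel_mul_le (x : ℝ) (z g : ℂ) (hz : (x : ℂ) - z ≠ 0) :
    ‖(1 + x * z) * g / (x - z)‖ ≤ ‖z‖ * ‖g‖ + (1 + ‖z‖ ^ 2) * (‖g‖ / ‖(x : ℂ) - z‖) := by
  have h : (1 + x * z) * g / (x - z) = z * g + (1 + z ^ 2) * (g / (x - z)) := by
    field_simp
    ring
  rw [h]
  refine (norm_add_le _ _).trans ?_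
  rw [norm_mul, norm_mul, norm_div]
  gcongr
  refine (norm_add_le _ _).trans ?_
  simp

/-- Let `χ ∈ C_c^∞(ℝ)` with support in `(−a,a)` and almost analytic
extension `χ̃(x+iy) = χ(x) + iyχ'(x) − (y²/2)χ''(x)`. For `ε ∈ (0,1]` and `x, λ ∈ ℝ` set
`f_ε(λ,x) = (1 + x(λ+iε))(χ̃(λ+iε) − χ(λ))/(x − λ − iε)`. Then there is `C > 0`
(depending only on `a, χ`) with `|∫_{−a}^{a} f_ε(λ,x) dλ| ≤ C√ε` for all `x` and all
`ε ∈ (0,1]`. -/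
theorem f_eps_integral_bound
    (a : ℝ) (ha : 0 < a)
    (χ : ℝ → ℝ) (hχ : ContDiff ℝ (⊤ : ℕ∞) χ) (hsupp : Function.support χ ⊆ Ioo (-a) a)
    (χt : ℂ → ℂ)
    (hχt : ∀ w : ℂ, χt w = (χ w.re : ℂ) + Complex.I * (w.im : ℂ) * (Complex.ofReal (deriv χ w.re))
        - ((w.im ^ 2 / 2 : ℝ) : ℂ) * (Complex.ofReal (deriv (deriv χ) w.re))) :
    ∃ C > (0:ℝ), ∀ x : ℝ, ∀ ε : ℝ, 0 < ε → ε ≤ 1 →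
      norm
        (∫ t in (-a)..a,
          (1 + (x : ℂ) * ((t : ℂ) + (ε : ℂ) * Complex.I)) *
            (χt ((t : ℂ) + (ε : ℂ) * Complex.I) - (χ t : ℂ)) /
              ((x : ℂ) - (t : ℂ) - (ε : ℂ) * Complex.I)) ≤ C * Real.sqrt ε := by
  have hχ1 : ContDiff ℝ (⊤ : ℕ∞) (deriv χ) := (contDiff_infty_iff_deriv.1 hχ).2
  have hχ2 : ContDiff ℝ (⊤ : ℕ∞) (deriv (deriv χ)) := (contDiff_infty_iff_deriv.1 hχ1).2
  obtain ⟨A, hA⟩ := isCompact_Icc.exists_bound_of_continuousOn (s := Icc (-a) a)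
    hχ1.continuous.continuousOn
  obtain ⟨B, hB⟩ := isCompact_Icc.exists_bound_of_continuousOn (s := Icc (-a) a)
    hχ2.continuous.continuousOn
  have h0 : (0 : ℝ) ∈ Icc (-a) a := ⟨by linarith, ha.le⟩
  have hA0 : 0 ≤ A := (norm_nonneg _).trans (hA 0 h0)
  have hB0 : 0 ≤ B := (norm_nonneg _).trans (hB 0 h0)
  set M := A + B + 1 with hM
  have hM0 : 0 < M := by positivity
  set R := a + 1 with hR
  have hR0 : 0 < R := by positivity
  set K := M * (R + (1 + R ^ 2)) with hK
  have hK0 : 0 < K := by positivity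
  refine ⟨K * (2 * a + π), by positivity, fun x ε hε hε1 => ?_⟩
  have hs0 := Real.sqrt_nonneg ε
  obtain ⟨hPint, hPle⟩ := integral_poissonKernel_le_pi x (-a) a ε hε
  have hεs : ε ≤ √ε := by
    rw [Real.le_sqrt hε.le hε.le]
    nlinarith
  have hle : ∀ t ∈ Ioc (-a) a,
      ‖(1 + (x : ℂ) * ((t : ℂ) + (ε : ℂ) * Complex.I)) *
            (χt ((t : ℂ) + (ε : ℂ) * Complex.I) - (χ t : ℂ)) /
              ((x : ℂ) - (t : ℂ) - (ε : ℂ) * Complex.I)‖ ≤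
        K * √ε * (1 + ε / ((x - t) ^ 2 + ε ^ 2)) := by
    intro t ht
    have htI : t ∈ Icc (-a) a := Ioc_subset_Icc_self ht
    have hP0 : 0 ≤ ε / ((x - t) ^ 2 + ε ^ 2) := by positivity
    have hz := eps_div_norm_le_sqrt_mul x t ε hε
    rw [sub_sub]
    have hg : ‖χt ((t : ℂ) + (ε : ℂ) * Complex.I) - (χ t : ℂ)‖ ≤ M * ε := by
      have he : χt ((t : ℂ) + (ε : ℂ) * Complex.I) - (χ t : ℂ) =
          Complex.I * (ε : ℂ) * (deriv χ t : ℝ) -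
            ((ε ^ 2 / 2 : ℝ) : ℂ) * (deriv (deriv χ) t : ℝ) := by
        rw [hχt]
        simp
        ring
      rw [he]
      refine (norm_sub_le _ _).trans ?_
      rw [norm_mul, norm_mul, norm_mul, Complex.norm_I, Complex.norm_real, Complex.norm_real,
        Complex.norm_real, Complex.norm_real, Real.norm_of_nonneg hε.le,
        Real.norm_of_nonneg (by positivity : 0 ≤ ε ^ 2 / 2), one_mul]
      have h1 : ε * ‖deriv χ t‖ ≤ ε * A := by gcongr; exact hA t htI
      have h2 : ε ^ 2 / 2 * ‖deriv (deriv χ) t‖ ≤ ε * B := by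
        gcongr
        · nlinarith
        · exact hB t htI
      rw [hM]
      linarith
    have hzR : ‖(t : ℂ) + (ε : ℂ) * Complex.I‖ ≤ R := by
      refine (norm_add_le _ _).trans ?_
      rw [norm_mul, Complex.norm_I, Complex.norm_real, Complex.norm_real, mul_one,
        Real.norm_of_nonneg hε.le, Real.norm_eq_abs]
      linarith [abs_le.2 htI]
    have hne : (x : ℂ) - ((t : ℂ) + (ε : ℂ) * Complex.I) ≠ 0 := fun h => by
      have := congrArg Complex.im h
      simp at this
      exact hε.ne' this
    calc _ ≤ _ := norm_herglotzKernel_mul_le x _ _ hne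
      _ ≤ R * (M * ε) +
          (1 + R ^ 2) * (M * ε / ‖(x : ℂ) - ((t : ℂ) + (ε : ℂ) * Complex.I)‖) := by gcongr
      _ ≤ R * (M * (√ε * (1 + ε / ((x - t) ^ 2 + ε ^ 2)))) +
          (1 + R ^ 2) * (M * (√ε * (1 + ε / ((x - t) ^ 2 + ε ^ 2)))) := by
        rw [mul_div_assoc]
        gcongr
        nlinarith
      _ = _ := by rw [hK]; ring
  have hint : IntervalIntegrable (fun t : ℝ => K * √ε * (1 + ε / ((x - t) ^ 2 + ε ^ 2)))
      MeasureTheory.volume (-a) a :=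
    (intervalIntegrable_const.add hPint).const_mul _
  refine (intervalIntegral.norm_integral_le_of_norm_le (by linarith)
    (Filter.Eventually.of_forall hle) hint).trans ?_
  rw [intervalIntegral.integral_const_mul,
    intervalIntegral.integral_add intervalIntegrable_const hPint, intervalIntegral.integral_const]
  calc _ ≤ K * √ε * ((a - -a) • 1 + π) := by gcongr
    _ = _ := by simp only [smul_eq_mul]; ring
end
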